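/- arXiv:2203.15736 — 2 statements merged into one kernel-verified Lean document; each statement's English description precedes it below -/
import Mathlib

section
/- Suppose α ≥ β > 0, and let Y ~ Bin(m⁺, α log n / n) and Z ~ Bin(m⁻, β log n / n) be independent with m⁺ = (1+o(1)) n/2 and m⁻ = (1+o(1)) n/2. Then P(Y < Z) = n^{−D₊(α,β)+o(1)}, where D₊(α,β) = (√α − √β)²/2 = (α+β)/2 − √(αβ). -/
open Finset

/-- `binomP m p k` is the probability that `Bin(m, p) = k`. -/
noncomputable def binomP (m : ℕ) (p : ℝ) (k : ℕ) : ℝ :=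
  (m.choose k : ℝ) * p ^ k * (1 - p) ^ (m - k)

/-- `P(Y < Z)` for independent `Y ~ Bin(mp, p)` and `Z ~ Bin(mm, q)`. -/
noncomputable def probYltZ (mp mm : ℕ) (p q : ℝ) : ℝ :=
  ∑ k ∈ Finset.range (mp + 1), ∑ l ∈ Finset.range (mm + 1),
    (if k < l then binomP mp p k * binomP mm q l else 0)

theorem binomP_nonneg (m : ℕ) (p : ℝ) (k : ℕ) (h0 : 0 ≤ p) (h1 : p ≤ 1) : 0 ≤ binomP m p k := by
  have : 0 ≤ 1 - p := by linarith
  unfold binomP; positivity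

theorem binomP_sum (m : ℕ) (p x : ℝ) :
    ∑ k ∈ Finset.range (m + 1), binomP m p k * x ^ k = (1 - p + p * x) ^ m := by
  rw [add_comm (1 - p), add_pow]
  apply Finset.sum_congr rfl
  intro k _
  unfold binomP
  rw [mul_pow]; ring

theorem prob_upper (m m' : ℕ) (p q s : ℝ) (hp0 : 0 ≤ p) (hp1 : p ≤ 1) (hq0 : 0 ≤ q) (hq1 : q ≤ 1)
    (hs : 1 ≤ s) :
    probYltZ m m' p q ≤ Real.exp (-(m * (p - p / s)) + m' * (q * s - q)) := by
  have hs0 : 0 < s := by linarith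
  have h1 : probYltZ m m' p q ≤ (1 - p + p * s⁻¹) ^ m * (1 - q + q * s) ^ m' := by
    rw [← binomP_sum, ← binomP_sum, Finset.sum_mul_sum]
    unfold probYltZ
    apply Finset.sum_le_sum; intro k _
    apply Finset.sum_le_sum; intro l _
    have A := binomP_nonneg m p k hp0 hp1
    have B := binomP_nonneg m' q l hq0 hq1
    split_ifs with h
    · have : 1 ≤ s⁻¹ ^ k * s ^ l := by
        rw [inv_pow, ← div_eq_inv_mul, le_div_iff₀ (by positivity), one_mul]
        exact pow_le_pow_right₀ hs h.le
      calc binomP m p k * binomP m' q l = binomP m p k * binomP m' q l * 1 := by ring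
        _ ≤ binomP m p k * binomP m' q l * (s⁻¹ ^ k * s ^ l) := by gcongr
        _ = _ := by ring
    · positivity
  refine h1.trans ?_
  rw [Real.exp_add]
  have e1 : (1 - p + p * s⁻¹) ^ m ≤ Real.exp (-(m * (p - p / s))) := by
    rw [show -((m:ℝ) * (p - p / s)) = m * (-(p - p / s)) by ring, Real.exp_nat_mul]
    have : 0 ≤ 1 - p := by linarith
    apply pow_le_pow_left₀ (by positivity)
    have := Real.add_one_le_exp (-(p - p / s))
    rw [← div_eq_mul_inv]; linarith
  have e2 : (1 - q + q * s) ^ m' ≤ Real.exp (m' * (q * s - q)) := by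
    rw [Real.exp_nat_mul]
    have : 0 ≤ 1 - q := by linarith
    apply pow_le_pow_left₀ (by positivity)
    have := Real.add_one_le_exp (q * s - q)
    linarith
  have : 0 ≤ 1 - q := by linarith
  exact mul_le_mul e1 e2 (by positivity) (by positivity)

theorem prob_lower (m m' k : ℕ) (p q : ℝ) (hp0 : 0 ≤ p) (hp1 : p ≤ 1) (hq0 : 0 ≤ q) (hq1 : q ≤ 1)
    (hk : k ≤ m) (hk' : k + 1 ≤ m') :
    binomP m p k * binomP m' q (k + 1) ≤ probYltZ m m' p q := by
  have nn : ∀ i j, 0 ≤ (if i < j then binomP m p i * binomP m' q j else 0) := by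
    intro i j
    have A := binomP_nonneg m p i hp0 hp1
    have B := binomP_nonneg m' q j hq0 hq1
    split_ifs <;> positivity
  unfold probYltZ
  have h1 := Finset.single_le_sum (s := Finset.range (m + 1))
    (f := fun k => ∑ l ∈ Finset.range (m' + 1),
      (if k < l then binomP m p k * binomP m' q l else 0))
    (fun i _ => Finset.sum_nonneg fun j _ => nn i j) (Finset.mem_range.2 (Nat.lt_succ_of_le hk))
  have h2 := Finset.single_le_sum (s := Finset.range (m' + 1))
    (f := fun l => (if k < l then binomP m p k * binomP m' q l else 0))
    (fun j _ => nn k j) (Finset.mem_range.2 (Nat.lt_succ_of_le hk'))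
  simp only [Nat.lt_succ_self, if_true] at h2
  refine le_trans ?_ h1
  simpa using h2

theorem binomP_lower (m k : ℕ) (p : ℝ) (hp0 : 0 < p) (hp1 : p < 1) (hk0 : 0 < k) (hk : k < m) :
    Real.exp (k * (Real.log (((m:ℝ) - k) * p / k) + 1) - Real.log (Stirling.stirlingSeq k)
      - 1 / 2 * Real.log (2 * k) - m * p / (1 - p)) ≤ binomP m p k := by
  have hkR : (0:ℝ) < k := by exact_mod_cast hk0
  have hmk : (0:ℝ) < (m:ℝ) - k := by
    have : (k:ℝ) < m := by exact_mod_cast hk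
    linarith
  have h1p : 0 < 1 - p := by linarith
  have hfac : (0:ℝ) < (k.factorial : ℝ) := by positivity
  have c1 : ((m:ℝ) - k) ^ k / k.factorial ≤ m.choose k := by
    rw [div_le_iff₀ hfac]
    have h := Nat.pow_sub_le_descFactorial m k
    rw [Nat.descFactorial_eq_factorial_mul_choose] at h
    have h' : (m - k) ^ k ≤ (m + 1 - k) ^ k := Nat.pow_le_pow_left (by omega) k
    have h2 := h'.trans h
    have h3 : (((m - k : ℕ) : ℝ)) ^ k ≤ k.factorial * m.choose k := by exact_mod_cast h2
    rw [Nat.cast_sub hk.le] at h3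
    linarith
  have c2 : (1 - p) ^ m ≤ (1 - p) ^ (m - k) :=
    pow_le_pow_of_le_one h1p.le (by linarith) (by omega)
  have c3 : Real.exp (- (m * p / (1 - p))) ≤ (1 - p) ^ m := by
    rw [show -((m:ℝ) * p / (1 - p)) = m * (-(p / (1 - p))) by ring, Real.exp_nat_mul]
    apply pow_le_pow_left₀ (Real.exp_pos _).le
    rw [← Real.le_log_iff_exp_le h1p]
    have := Real.one_sub_inv_le_log_of_pos h1p
    have e : 1 - (1 - p)⁻¹ = -(p / (1 - p)) := by field_simp; ring
    linarith
  have key : Real.exp (k * (Real.log (((m:ℝ) - k) * p / k) + 1) - Real.log (Stirling.stirlingSeq k)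
      - 1 / 2 * Real.log (2 * k)) = ((m:ℝ) - k) ^ k / k.factorial * p ^ k := by
    rw [Stirling.log_stirlingSeq_formula, Real.log_div hkR.ne' (Real.exp_pos 1).ne', Real.log_exp,
      Real.log_div (by positivity) hkR.ne']
    rw [show ((m:ℝ) - k) ^ k / k.factorial * p ^ k = (((m:ℝ) - k) * p) ^ k / k.factorial by
      rw [mul_pow]; ring]
    rw [← Real.exp_log (show 0 < (((m:ℝ) - k) * p) ^ k / k.factorial by positivity),
      Real.log_div (by positivity) (by positivity), Real.log_pow]
    congr 1
    ring
  rw [sub_eq_add_neg _ ((m:ℝ) * p / (1 - p)), Real.exp_add, key]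
  unfold binomP
  have := c3.trans c2
  gcongr

open Filter Topology in
theorem binomP_asymp (a c : ℝ) (ha : 0 < a) (hc : 0 < c) (m k : ℕ → ℕ)
    (hm : Tendsto (fun n : ℕ => (m n : ℝ) / n) atTop (𝓝 (1 / 2)))
    (hk : Tendsto (fun n : ℕ => (k n : ℝ) / Real.log n) atTop (𝓝 (c / 2))) :
    ∃ g : ℕ → ℝ, Tendsto g atTop (𝓝 (c / 2 * (Real.log (a / c) + 1) - a / 2)) ∧
      ∀ᶠ n : ℕ in atTop, k n ≤ m n ∧
        Real.exp (Real.log n * g n) ≤ binomP (m n) (a * Real.log n / n) (k n) := by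
  have hL : Tendsto (fun n : ℕ => Real.log n) atTop atTop :=
    Real.tendsto_log_atTop.comp tendsto_natCast_atTop_atTop
  have hLn : Tendsto (fun n : ℕ => Real.log n / n) atTop (𝓝 0) :=
    (Real.isLittleO_log_id_atTop.tendsto_div_nhds_zero).comp tendsto_natCast_atTop_atTop
  have hL1 : ∀ᶠ n : ℕ in atTop, 0 < Real.log n := hL.eventually_gt_atTop 0
  have hp : Tendsto (fun n : ℕ => a * Real.log n / n) atTop (𝓝 0) := by
    have := hLn.const_mul a
    simpa [mul_div_assoc] using this
  have hkn : Tendsto (fun n : ℕ => (k n : ℝ) / n) atTop (𝓝 0) := by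
    have := hk.mul hLn
    rw [mul_zero] at this
    refine this.congr' ?_
    filter_upwards [hL1] with n h1
    field_simp
  have hkR : Tendsto (fun n : ℕ => (k n : ℝ)) atTop atTop := by
    have := hk.pos_mul_atTop (by positivity) hL
    refine this.congr' ?_
    filter_upwards [hL1] with n h1
    field_simp
  have hkN : Tendsto k atTop atTop := tendsto_natCast_atTop_iff.1 hkR
  have hst : Tendsto (fun n : ℕ => Real.log (Stirling.stirlingSeq (k n)) / Real.log n)
      atTop (𝓝 0) := by
    have h1 : Tendsto (fun n : ℕ => Real.log (Stirling.stirlingSeq (k n))) atTop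
        (𝓝 (Real.log (Real.sqrt Real.pi))) :=
      (Stirling.tendsto_stirlingSeq_sqrt_pi.log (by positivity)).comp hkN
    exact h1.div_atTop hL
  have hlk : Tendsto (fun n : ℕ => 1 / 2 * Real.log (2 * k n) / Real.log n) atTop (𝓝 0) := by
    have h0 : Tendsto (fun n : ℕ => 2 * (k n : ℝ)) atTop atTop := hkR.const_mul_atTop two_pos
    have h1 := (Real.isLittleO_log_id_atTop.tendsto_div_nhds_zero).comp h0
    have h2 := h1.mul hk
    rw [zero_mul] at h2
    refine h2.congr' ?_
    filter_upwards [hkR.eventually_gt_atTop 0] with n h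
    simp only [Function.comp, id]
    field_simp
  have hmk : Tendsto (fun n : ℕ => (m n : ℝ) / n - k n / n) atTop (𝓝 (1 / 2)) := by
    simpa using hm.sub hkn
  refine ⟨fun n => (k n / Real.log n) *
      (Real.log (((m n : ℝ) / n - k n / n) * a / (k n / Real.log n)) + 1)
      - Real.log (Stirling.stirlingSeq (k n)) / Real.log n
      - 1 / 2 * Real.log (2 * k n) / Real.log n
      - (m n / n) * a / (1 - a * Real.log n / n), ?_, ?_⟩
  · have hq : Tendsto (fun n : ℕ => ((m n : ℝ) / n - k n / n) * a / (k n / Real.log n)) atTop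
        (𝓝 (a / c)) := by
      have := (hmk.mul_const a).div hk (by positivity)
      rw [show 1 / 2 * a / (c / 2) = a / c by field_simp] at this
      exact this
    have h1 := hk.mul ((hq.log (by positivity)).add_const 1)
    have h2 : Tendsto (fun n : ℕ => ((m n : ℝ) / n) * a / (1 - a * Real.log n / n)) atTop
        (𝓝 (1 / 2 * a / (1 - 0))) := (hm.mul_const a).div (hp.const_sub 1) (by norm_num)
    have := ((h1.sub hst).sub hlk).sub h2
    convert this using 2
    ring
  · filter_upwards [hL1, hp.eventually_lt_const one_pos, hkR.eventually_gt_atTop 0,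
      hmk.eventually_const_lt (show (0:ℝ) < 1 / 2 by norm_num), eventually_gt_atTop 0]
      with n h1 h2 h3 h4 h5
    have hn : (0:ℝ) < n := by exact_mod_cast h5
    have hlt : k n < m n := by
      rw [← sub_div] at h4
      have := (div_pos_iff_of_pos_right hn).1 h4
      have : (k n : ℝ) < m n := by linarith
      exact_mod_cast this
    refine ⟨hlt.le, ?_⟩
    refine le_trans (le_of_eq ?_) (binomP_lower (m n) (k n) (a * Real.log n / n) (by positivity) h2
      (by exact_mod_cast h3) hlt)
    congr 1
    have e : ((m n : ℝ) / n - k n / n) * a / (k n / Real.log n)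
        = ((m n:ℝ) - k n) * (a * Real.log n / n) / k n := by
      field_simp
    rw [e]
    generalize Real.log (((m n:ℝ) - k n) * (a * Real.log n / n) / k n) = X
    have h6 : 1 - a * Real.log n / n ≠ 0 := by linarith
    generalize hY : 1 - a * Real.log n / n = Y at *
    field_simp

/-- for `α ≥ β > 0` and independent `Y ~ Bin(m⁺, α log n/n)`,
`Z ~ Bin(m⁻, β log n/n)` with `m⁺, m⁻ = (1+o(1)) n/2`, one has
`P(Y < Z) = n^{−D₊(α,β)+o(1)}` where `D₊(α,β) = (α+β)/2 − √(αβ)`: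
for every `δ > 0`, eventually `n^{−D₊−δ} ≤ P(Y < Z) ≤ n^{−D₊+δ}`. -/
theorem statement5 (α β : ℝ) (hβ : 0 < β) (hβα : β ≤ α)
    (mp mm : ℕ → ℕ)
    (hmp : Filter.Tendsto (fun n : ℕ => (mp n : ℝ) / ((n : ℝ) / 2))
      Filter.atTop (nhds 1))
    (hmm : Filter.Tendsto (fun n : ℕ => (mm n : ℝ) / ((n : ℝ) / 2))
      Filter.atTop (nhds 1)) :
    ∀ δ : ℝ, 0 < δ → ∀ᶠ n : ℕ in Filter.atTop,
      (n : ℝ) ^ (-((α + β) / 2 - Real.sqrt (α * β)) - δ)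
        ≤ probYltZ (mp n) (mm n) (α * Real.log n / n) (β * Real.log n / n) ∧
      probYltZ (mp n) (mm n) (α * Real.log n / n) (β * Real.log n / n)
        ≤ (n : ℝ) ^ (-((α + β) / 2 - Real.sqrt (α * β)) + δ) := by
  intro δ hδ
  have hα : 0 < α := by linarith
  set γ := Real.sqrt (α * β) with hγd
  have hγ : 0 < γ := Real.sqrt_pos.2 (by positivity)
  have hγ2 : γ * γ = α * β := Real.mul_self_sqrt (by positivity)
  have half : ∀ m : ℕ → ℕ, Filter.Tendsto (fun n : ℕ => (m n : ℝ) / ((n : ℝ) / 2))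
      Filter.atTop (nhds 1) →
      Filter.Tendsto (fun n : ℕ => (m n : ℝ) / n) Filter.atTop (nhds (1 / 2)) := by
    intro m h
    have := h.div_const 2
    refine this.congr fun n => ?_
    rw [div_div, div_mul_cancel₀ _ (two_ne_zero)]
  have hmp' := half mp hmp
  have hmm' := half mm hmm
  have hL : Filter.Tendsto (fun n : ℕ => Real.log n) Filter.atTop Filter.atTop :=
    Real.tendsto_log_atTop.comp tendsto_natCast_atTop_atTop
  have hLn : Filter.Tendsto (fun n : ℕ => Real.log n / n) Filter.atTop (nhds 0) :=
    (Real.isLittleO_log_id_atTop.tendsto_div_nhds_zero).comp tendsto_natCast_atTop_atTop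
  have hL1 : ∀ᶠ n : ℕ in Filter.atTop, 0 < Real.log n := hL.eventually_gt_atTop 0
  have hp : ∀ a : ℝ, ∀ᶠ n : ℕ in Filter.atTop, a * Real.log n / n < 1 := by
    intro a
    have := hLn.const_mul a
    rw [mul_zero] at this
    filter_upwards [this.eventually_lt_const one_pos] with n h
    rwa [mul_div_assoc]
  -- choice of the dominating term
  have hk : Filter.Tendsto (fun n : ℕ => ((⌊γ / 2 * Real.log n⌋₊ : ℕ) : ℝ) / Real.log n)
      Filter.atTop (nhds (γ / 2)) :=
    (tendsto_nat_floor_mul_div_atTop (by positivity : 0 ≤ γ / 2)).comp hL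
  have hk1 : Filter.Tendsto (fun n : ℕ => ((⌊γ / 2 * Real.log n⌋₊ + 1 : ℕ) : ℝ) / Real.log n)
      Filter.atTop (nhds (γ / 2)) := by
    have h1 : Filter.Tendsto (fun n : ℕ => 1 / Real.log n) Filter.atTop (nhds 0) :=
      tendsto_const_nhds.div_atTop hL
    have := hk.add h1
    rw [add_zero] at this
    refine this.congr fun n => ?_
    push_cast
    ring
  obtain ⟨g1, hg1, hb1⟩ := binomP_asymp α γ hα hγ mp _ hmp' hk
  obtain ⟨g2, hg2, hb2⟩ := binomP_asymp β γ hβ hγ mm _ hmm' hk1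
  have hg : Filter.Tendsto (fun n => g1 n + g2 n) Filter.atTop
      (nhds (-((α + β) / 2 - γ))) := by
    have := hg1.add hg2
    convert this using 2
    have hlog : Real.log (α / γ) + Real.log (β / γ) = 0 := by
      rw [← Real.log_mul (by positivity) (by positivity), div_mul_div_comm, ← hγ2,
        div_self (by positivity), Real.log_one]
    have : Real.log (β / γ) = - Real.log (α / γ) := by linarith
    rw [this]; ring
  have hU : Filter.Tendsto (fun n : ℕ => -((mp n : ℝ) / n * (α - γ)) + (mm n : ℝ) / n * (γ - β))
      Filter.atTop (nhds (-((α + β) / 2 - γ))) := by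
    have := (hmp'.mul_const (α - γ)).neg.add (hmm'.mul_const (γ - β))
    convert this using 2
    ring
  have hs : 1 ≤ γ / β := by
    rw [le_div_iff₀ hβ, one_mul]
    apply Real.le_sqrt_of_sq_le
    nlinarith
  filter_upwards [hL1, hp α, hp β, hb1, hb2, Filter.eventually_gt_atTop 0,
    hg.eventually_const_lt (show -((α + β) / 2 - γ) - δ < -((α + β) / 2 - γ) by linarith),
    hU.eventually_lt_const (show -((α + β) / 2 - γ) < -((α + β) / 2 - γ) + δ by linarith)]
    with n h1 h2 h3 h4 h5 h6 h7 h8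
  have hn : (0:ℝ) < n := by exact_mod_cast h6
  have hp0 : 0 ≤ α * Real.log n / n := by positivity
  have hq0 : 0 ≤ β * Real.log n / n := by positivity
  rw [Real.rpow_def_of_pos hn, Real.rpow_def_of_pos hn]
  constructor
  · refine le_trans ?_ (prob_lower _ _ _ _ _ hp0 h2.le hq0 h3.le h4.1 h5.1)
    refine le_trans ?_ (mul_le_mul h4.2 h5.2 (Real.exp_pos _).le
      (binomP_nonneg _ _ _ hp0 h2.le))
    rw [← Real.exp_add, ← mul_add]
    gcongr
  · refine le_trans (prob_upper _ _ _ _ (γ / β) hp0 h2.le hq0 h3.le hs) ?_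
    apply Real.exp_le_exp.2
    refine le_trans (le_of_eq ?_) (mul_le_mul_of_nonneg_left h8.le h1.le)
    have e1 : α * Real.log n / n / (γ / β) = γ * Real.log n / n := by
      field_simp
      nlinarith
    have e2 : β * Real.log n / n * (γ / β) = γ * Real.log n / n := by
      field_simp
    rw [e1, e2]
    ring
end

section
/- Let G ~ SBM(n, α log n / n, β log n / n) with fixed α, β > 0, fix k ≥ 1, and let F denote the set of vertices outside the k-core of G. Then with probability 1 − o(1), |F| ≤ n^{1 − (α+β)/2 + o(1)}. -/
open MeasureTheory Finset

/-- `sbmLaw ℙ n p q σ X`: under `ℙ`, the labels `σ` and adjacency indicators `X` are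
distributed as `SBM(n, p, q)`. -/
def sbmLaw {Ω : Type} [MeasurableSpace Ω] (ℙ : Measure Ω) (n : ℕ) (p q : ℝ)
    (σ : Ω → Fin n → Bool) (X : Ω → Fin n → Fin n → Bool) : Prop :=
  ℙ {ω | (∀ i j, X ω i j = X ω j i) ∧ ∀ i, X ω i i = false} = 1 ∧
  ∀ (ℓ : Fin n → Bool) (e : Fin n → Fin n → Bool),
    (∀ i j, e i j = e j i) → (∀ i, e i i = false) →
    (ℙ {ω | σ ω = ℓ ∧ X ω = e}).toReal =
      (1 / 2 : ℝ) ^ n * ∏ i : Fin n, ∏ j : Fin n,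
        (if i < j then
          (if e i j then (if ℓ i = ℓ j then p else q)
           else 1 - (if ℓ i = ℓ j then p else q))
         else 1)


/-- Number of edges from `U` to its complement. -/
def cross {n : ℕ} (e : Fin n → Fin n → Bool) (U : Finset (Fin n)) : ℕ :=
  ∑ u ∈ U, (Uᶜ.filter (fun w => e u w = true)).card

lemma peel {n : ℕ} (e : Fin n → Fin n → Bool) (k m : ℕ)
    (h : m ≤ Set.ncard {i : Fin n | ∀ S : Finset (Fin n),
            (∀ v ∈ S, k ≤ (S.filter (fun u => u ≠ v ∧ e v u = true)).card) →
            i ∉ S}) :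
    ∃ U : Finset (Fin n), U.card = m ∧ cross e U ≤ k * m := by
  induction m with
  | zero => exact ⟨∅, by simp, by simp [cross]⟩
  | succ m ih =>
    obtain ⟨U, hU, hc⟩ := ih (by omega)
    have hex : ∃ v ∈ Uᶜ, (Uᶜ.filter (fun u => u ≠ v ∧ e v u = true)).card < k := by
      by_contra hcon
      push Not at hcon
      have hsub : {i : Fin n | ∀ S : Finset (Fin n),
            (∀ v ∈ S, k ≤ (S.filter (fun u => u ≠ v ∧ e v u = true)).card) →
            i ∉ S} ⊆ (U : Set (Fin n)) := by
        intro i hi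
        have := hi Uᶜ hcon
        simpa using this
      have h2 := Set.ncard_le_ncard hsub (Set.toFinite _)
      rw [Set.ncard_coe_finset] at h2
      omega
    obtain ⟨v, hv, hlt⟩ := hex
    have hvU : v ∉ U := by simpa using hv
    refine ⟨insert v U, by rw [card_insert_of_notMem hvU, hU], ?_⟩
    unfold cross at hc ⊢
    rw [sum_insert hvU]
    have h1 : ((insert v U)ᶜ.filter (fun w => e v w = true)).card
        ≤ (Uᶜ.filter (fun u => u ≠ v ∧ e v u = true)).card := by
      apply card_le_card
      intro w hw
      simp only [mem_filter, mem_compl, mem_insert, not_or] at hw ⊢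
      tauto
    have h2 : ∑ u ∈ U, ((insert v U)ᶜ.filter (fun w => e u w = true)).card
        ≤ ∑ u ∈ U, (Uᶜ.filter (fun w => e u w = true)).card := by
      apply sum_le_sum
      intro u _
      apply card_le_card
      intro w hw
      simp only [mem_filter, mem_compl, mem_insert, not_or] at hw ⊢
      tauto
    rw [Nat.mul_succ]
    omega

lemma prod_pairs {n : ℕ} (G : Fin n → Fin n → ℝ) (hd : ∀ i, G i i = 1) :
    ∏ i, ∏ j, G i j = ∏ i, ∏ j, (if i < j then G i j * G j i else 1) := by
  have h1 : ∀ i j, G i j = (if i < j then G i j else 1) * (if j < i then G i j else 1) := by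
    intro i j
    rcases lt_trichotomy i j with h | h | h
    · simp [h, not_lt.2 h.le]
    · subst h; simp [hd]
    · simp [h, not_lt.2 h.le]
  have h2 : ∏ i, ∏ j, G i j = (∏ i, ∏ j, (if i < j then G i j else 1)) *
      ∏ i, ∏ j, (if j < i then G i j else 1) := by
    rw [← prod_mul_distrib]
    refine prod_congr rfl fun i _ => ?_
    rw [← prod_mul_distrib]
    exact prod_congr rfl fun j _ => h1 i j
  rw [h2, prod_comm (f := fun i j => if j < i then G i j else 1), ← prod_mul_distrib]
  refine prod_congr rfl fun i _ => ?_
  rw [← prod_mul_distrib]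
  refine prod_congr rfl fun j _ => ?_
  split_ifs <;> simp

/-- Symmetric loopless adjacency. -/
def symE {n : ℕ} (e : Fin n → Fin n → Bool) : Prop :=
  (∀ i j, e i j = e j i) ∧ ∀ i, e i i = false

open Classical in
lemma sum_sym {n : ℕ} (f : Fin n → Fin n → Bool → ℝ) (hf : ∀ i j b, 0 ≤ f i j b) :
    ∑ e ∈ univ.filter (fun e : Fin n → Fin n → Bool => symE e),
      ∏ i, ∏ j, (if i < j then f i j (e i j) else 1)
    ≤ ∏ i, ∏ j, (if i < j then f i j true + f i j false else 1) := by
  set F : Fin n → Fin n → Bool → ℝ := fun i j b =>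
    if i < j then f i j b else (if b then 0 else 1) with hF
  have hF0 : ∀ i j b, 0 ≤ F i j b := by
    intro i j b
    simp only [hF]
    split_ifs <;> first | exact hf _ _ _ | norm_num
  have hR : ∏ i, ∏ j, (if i < j then f i j true + f i j false else 1)
      = ∑ g : Fin n × Fin n → Bool, ∏ x : Fin n × Fin n, F x.1 x.2 (g x) := by
    have := Finset.prod_univ_sum (fun _ : Fin n × Fin n => (univ : Finset Bool))
      (fun x b => F x.1 x.2 b)
    rw [Fintype.piFinset_univ] at this
    rw [← this, Fintype.prod_prod_type]
    refine prod_congr rfl fun i _ => prod_congr rfl fun j _ => ?_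
    simp only [hF, Fintype.sum_bool]
    by_cases hij : i < j <;> simp [hij]
  rw [hR]
  set φ : (Fin n → Fin n → Bool) → (Fin n × Fin n → Bool) := fun e x =>
    if x.1 < x.2 then e x.1 x.2 else false with hφ
  have hinj : Set.InjOn φ (univ.filter (fun e : Fin n → Fin n → Bool => symE e)) := by
    intro a ha b hb hab
    simp only [coe_filter, mem_univ, true_and, Set.mem_ofPred_eq] at ha hb
    have key : ∀ i j, i < j → a i j = b i j := by
      intro i j hij
      have := congrFun hab (i, j)
      simpa [hφ, hij] using this
    funext i j
    rcases lt_trichotomy i j with h | h | h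
    · exact key i j h
    · subst h; rw [ha.2, hb.2]
    · rw [ha.1, hb.1]; exact key j i h
  calc _ = ∑ e ∈ univ.filter (fun e : Fin n → Fin n → Bool => symE e),
        ∏ x : Fin n × Fin n, F x.1 x.2 (φ e x) := by
        refine sum_congr rfl fun e _ => ?_
        rw [Fintype.prod_prod_type]
        refine prod_congr rfl fun i _ => prod_congr rfl fun j _ => ?_
        simp only [hF, hφ]
        split_ifs <;> simp_all
    _ = ∑ g ∈ (univ.filter (fun e : Fin n → Fin n → Bool => symE e)).image φ,
        ∏ x : Fin n × Fin n, F x.1 x.2 (g x) := by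
        rw [sum_image hinj]
    _ ≤ _ := by
        apply sum_le_sum_of_subset_of_nonneg (subset_univ _)
        intro g _ _
        exact prod_nonneg fun x _ => hF0 _ _ _

lemma avg_exp (A B : ℝ) (hA : 0 ≤ A) (hB : 0 ≤ B) :
    Real.exp (-A) + Real.exp (-B) ≤ 2 * Real.exp (-(A + B) / 2 + (A + B) ^ 2 / 4) := by
  have key : ∀ x : ℝ, 0 ≤ x → Real.exp (-x) ≤ 1 - x + x ^ 2 / 2 := by
    intro x hx
    have h1 := Real.quadratic_le_exp_of_nonneg hx
    rw [Real.exp_neg, inv_le_comm₀ (Real.exp_pos _) (by nlinarith [sq_nonneg (x - 1)])]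
    refine le_trans ?_ h1
    rw [inv_le_iff_one_le_mul₀ (by nlinarith [sq_nonneg (x - 1)])]
    nlinarith [sq_nonneg (x ^ 2)]
  have h := Real.add_one_le_exp (-(A + B) / 2 + (A + B) ^ 2 / 4)
  nlinarith [key A hA, key B hB, mul_nonneg hA hB]

lemma label_sum {n : ℕ} (U : Finset (Fin n)) (p q : ℝ) (hp : 0 ≤ p) (hq : 0 ≤ q) :
    ∑ l : Fin n → Bool, ∏ i ∈ U, ∏ j ∈ Uᶜ, Real.exp (-(if l i = l j then p else q))
    ≤ 2 ^ n * Real.exp ((n - U.card : ℝ) *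
      (-(U.card * (p + q)) / 2 + (U.card * (p + q)) ^ 2 / 4)) := by
  classical
  set M := Real.exp (-(U.card * (p + q)) / 2 + (U.card * (p + q)) ^ 2 / 4) with hM
  have hcardle : U.card ≤ n := by simpa using card_le_univ U
  have hS : ∀ l : Fin n → Bool, ∏ i ∈ U, ∏ j ∈ Uᶜ, Real.exp (-(if l i = l j then p else q))
      = ∏ j : {x // ¬ x ∈ U}, Real.exp (-∑ i : {x // x ∈ U}, (if l i = l j then p else q)) := by
    intro l
    rw [prod_comm]
    rw [← prod_subtype (f := fun j => Real.exp (-∑ i : {x // x ∈ U},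
      (if l i = l j then p else q))) Uᶜ (by simp)]
    refine prod_congr rfl fun j _ => ?_
    rw [← Real.exp_sum, ← sum_neg_distrib]
    congr 1
    rw [sum_subtype U (fun x => Iff.rfl)]
  simp_rw [hS]
  rw [← (Equiv.piEquivPiSubtypeProd (fun x => x ∈ U) (fun _ : Fin n => Bool)).symm.sum_comp]
  rw [Fintype.sum_prod_type]
  have hU : Fintype.card {x // x ∈ U} = U.card := by simp
  have hUc : Fintype.card {x // ¬ x ∈ U} = n - U.card := by
    rw [Fintype.card_subtype_compl]; simp
  have hinner : ∀ a : {x // x ∈ U} → Bool,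
      ∑ b : {x // ¬ x ∈ U} → Bool, ∏ j : {x // ¬ x ∈ U},
        Real.exp (-∑ i : {x // x ∈ U}, (if a i = b j then p else q))
      ≤ (2 * M) ^ (n - U.card) := by
    intro a
    have := Finset.prod_univ_sum (fun _ : {x // ¬ x ∈ U} => (univ : Finset Bool))
      (fun _ b => Real.exp (-∑ i : {x // x ∈ U}, (if a i = b then p else q)))
    rw [Fintype.piFinset_univ] at this
    rw [← this, prod_const, card_univ, hUc]
    apply pow_le_pow_left₀ (sum_nonneg fun _ _ => (Real.exp_pos _).le)
    rw [Fintype.sum_bool]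
    have hAB : ∑ i : {x // x ∈ U}, (if a i = true then p else q) +
        ∑ i : {x // x ∈ U}, (if a i = false then p else q) = U.card * (p + q) := by
      rw [← sum_add_distrib]
      rw [sum_congr rfl (g := fun _ => p + q)]
      · simp; ring
      · intro i _
        cases a i <;> simp [add_comm]
    have h3 := avg_exp (∑ i : {x // x ∈ U}, (if a i = true then p else q))
      (∑ i : {x // x ∈ U}, (if a i = false then p else q))
      (sum_nonneg fun _ _ => by split_ifs <;> assumption)
      (sum_nonneg fun _ _ => by split_ifs <;> assumption)
    rw [hAB] at h3
    exact h3
  calc _ ≤ ∑ a : {x // x ∈ U} → Bool, (2 * M) ^ (n - U.card) := by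
        refine sum_le_sum fun a _ => ?_
        refine le_trans (le_of_eq ?_) (hinner a)
        refine sum_congr rfl fun b _ => prod_congr rfl fun j _ => ?_
        congr 2
        refine sum_congr rfl fun i _ => ?_
        simp [Equiv.piEquivPiSubtypeProd, j.2]
    _ = _ := by
        rw [sum_const, card_univ, Fintype.card_fun, hU, Fintype.card_bool, nsmul_eq_mul,
          mul_pow, hM, ← Real.exp_nat_mul, Nat.cast_sub hcardle]
        push_cast
        rw [← mul_assoc, ← pow_add, Nat.add_sub_cancel' hcardle]

/-- SBM weight -/
noncomputable def wt {n : ℕ} (p q : ℝ) (l : Fin n → Bool) (e : Fin n → Fin n → Bool) : ℝ :=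
  (1 / 2 : ℝ) ^ n * ∏ i : Fin n, ∏ j : Fin n,
        (if i < j then
          (if e i j then (if l i = l j then p else q)
           else 1 - (if l i = l j then p else q))
         else 1)

lemma wt_nonneg {n : ℕ} (p q : ℝ) (hp : 0 ≤ p) (hq : 0 ≤ q) (hp1 : p ≤ 1) (hq1 : q ≤ 1)
    (l : Fin n → Bool) (e : Fin n → Fin n → Bool) : 0 ≤ wt p q l e := by
  unfold wt
  refine mul_nonneg (by positivity) (prod_nonneg fun i _ => prod_nonneg fun j _ => ?_)
  split_ifs <;> linarith

lemma prod_U {n : ℕ} (U : Finset (Fin n)) (h : Fin n → Fin n → ℝ) :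
    ∏ i ∈ U, ∏ j ∈ Uᶜ, h i j = ∏ i, ∏ j, (if i ∈ U ∧ j ∉ U then h i j else 1) := by
  rw [← Fintype.prod_ite_mem U]
  refine prod_congr rfl fun i _ => ?_
  rw [← Fintype.prod_ite_mem Uᶜ]
  by_cases hi : i ∈ U <;> simp [hi]

lemma pow_cross {n : ℕ} (e : Fin n → Fin n → Bool) (U : Finset (Fin n)) (t : ℝ) :
    t ^ cross e U = ∏ i ∈ U, ∏ j ∈ Uᶜ, (if e i j then t else 1) := by
  unfold cross
  rw [← prod_pow_eq_pow_sum]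
  refine prod_congr rfl fun i _ => ?_
  rw [prod_ite]; simp

open Classical in
lemma moment {n : ℕ} (U : Finset (Fin n)) (p q t : ℝ) (hp : 0 ≤ p) (hq : 0 ≤ q)
    (hp1 : p ≤ 1) (hq1 : q ≤ 1) (ht : 0 ≤ t) (ht1 : t ≤ 1) :
    ∑ l : Fin n → Bool, ∑ e ∈ univ.filter (fun e : Fin n → Fin n → Bool => symE e),
      wt p q l e * t ^ cross e U
    ≤ Real.exp ((n - U.card : ℝ) *
      (-(U.card * ((1 - t) * p + (1 - t) * q)) / 2 +
        (U.card * ((1 - t) * p + (1 - t) * q)) ^ 2 / 4)) := by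
  have h1 : ∀ l : Fin n → Bool, ∑ e ∈ univ.filter (fun e : Fin n → Fin n → Bool => symE e),
      wt p q l e * t ^ cross e U ≤ (1 / 2 : ℝ) ^ n * ∏ i ∈ U, ∏ j ∈ Uᶜ,
        Real.exp (-(if l i = l j then (1 - t) * p else (1 - t) * q)) := by
    intro l
    set r : Fin n → Fin n → ℝ := fun i j => if l i = l j then p else q with hr
    have hr0 : ∀ i j, 0 ≤ r i j := fun i j => by simp only [hr]; split_ifs <;> assumption
    have hr1 : ∀ i j, r i j ≤ 1 := fun i j => by simp only [hr]; split_ifs <;> assumption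
    have hrs : ∀ i j, r i j = r j i := fun i j => by simp only [hr, eq_comm]
    set f : Fin n → Fin n → Bool → ℝ := fun i j b =>
      (if b then r i j else 1 - r i j) *
      ((if i ∈ U ∧ j ∉ U then (if b then t else 1) else 1) *
       (if j ∈ U ∧ i ∉ U then (if b then t else 1) else 1)) with hf
    have hf0 : ∀ i j b, 0 ≤ f i j b := by
      intro i j b
      have := hr0 i j
      have := hr1 i j
      simp only [hf]
      refine mul_nonneg (by split_ifs <;> linarith) (mul_nonneg ?_ ?_) <;>
        split_ifs <;> linarith
    have h2 : ∀ e ∈ univ.filter (fun e : Fin n → Fin n → Bool => symE e),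
        wt p q l e * t ^ cross e U = (1 / 2 : ℝ) ^ n *
          ∏ i, ∏ j, (if i < j then f i j (e i j) else 1) := by
      intro e he
      simp only [mem_filter, mem_univ, true_and] at he
      rw [pow_cross, prod_U, prod_pairs]
      · unfold wt
        rw [mul_assoc, ← prod_mul_distrib]
        congr 1
        refine prod_congr rfl fun i _ => ?_
        rw [← prod_mul_distrib]
        refine prod_congr rfl fun j _ => ?_
        by_cases hij : i < j
        · simp only [hij, if_true, hf, hr, he.1 j i]
        · simp [hij]
      · intro i; simp
    rw [sum_congr rfl h2, ← mul_sum]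
    refine mul_le_mul_of_nonneg_left ?_ (by positivity)
    refine (sum_sym f hf0).trans ?_
    have h3 : ∏ i, ∏ j, (if i < j then f i j true + f i j false else 1)
        = ∏ i ∈ U, ∏ j ∈ Uᶜ, (1 - (1 - t) * r i j) := by
      rw [prod_U, prod_pairs (fun i j => if i ∈ U ∧ j ∉ U then 1 - (1 - t) * r i j else 1)]
      · refine prod_congr rfl fun i _ => prod_congr rfl fun j _ => ?_
        by_cases hij : i < j
        · simp only [hij, if_true, hf, hrs j i]
          by_cases hi : i ∈ U <;> by_cases hj : j ∈ U <;> simp [hi, hj] <;> ring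
        · simp [hij]
      · intro i; simp
    rw [h3]
    refine prod_le_prod (fun i _ => prod_nonneg fun j _ => ?_) fun i _ =>
      prod_le_prod (fun j _ => ?_) fun j _ => ?_
    · nlinarith [hr0 i j, hr1 i j]
    · nlinarith [hr0 i j, hr1 i j]
    · have : (if l i = l j then (1 - t) * p else (1 - t) * q) = (1 - t) * r i j := by
        simp only [hr]; split_ifs <;> rfl
      rw [this]
      have := Real.add_one_le_exp (-((1 - t) * r i j))
      linarith
  refine (sum_le_sum fun l _ => h1 l).trans ?_
  rw [← mul_sum]
  have h4 := label_sum U ((1 - t) * p) ((1 - t) * q) (mul_nonneg (by linarith) hp)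
    (mul_nonneg (by linarith) hq)
  calc _ ≤ (1 / 2 : ℝ) ^ n * _ := mul_le_mul_of_nonneg_left h4 (by positivity)
    _ = _ := by rw [← mul_assoc, ← mul_pow]; norm_num

open Classical in
lemma prob_le {n : ℕ} {Ω : Type} [MeasurableSpace Ω] (P : Measure Ω) [IsProbabilityMeasure P]
    (p q : ℝ) (σ : Ω → Fin n → Bool) (X : Ω → Fin n → Fin n → Bool)
    (hmeas : ∀ (ℓ : Fin n → Bool) (e : Fin n → Fin n → Bool),
      MeasurableSet {ω | σ ω = ℓ ∧ X ω = e})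
    (hsbm : sbmLaw P n p q σ X) (B : (Fin n → Fin n → Bool) → Prop) :
    MeasurableSet {ω | B (X ω)} ∧
    (P {ω | B (X ω)}).toReal ≤
      ∑ l : Fin n → Bool, ∑ e ∈ univ.filter (fun e : Fin n → Fin n → Bool => symE e),
        (if B e then wt p q l e else 0) := by
  have hm : ∀ C : (Fin n → Fin n → Bool) → Prop, MeasurableSet {ω | C (X ω)} := by
    intro C
    have : {ω | C (X ω)} = ⋃ l : Fin n → Bool, ⋃ e ∈ {e | C e}, {ω | σ ω = l ∧ X ω = e} := by
      ext ω; simp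
    rw [this]
    exact MeasurableSet.iUnion fun l => MeasurableSet.biUnion (Set.to_countable _)
      fun e _ => hmeas l e
  refine ⟨hm B, ?_⟩
  have hnull : P {ω | ¬ symE (X ω)} = 0 := by
    have h := hsbm.1
    have := (prob_compl_eq_zero_iff (μ := P) (hm (fun e => symE e))).2 h
    exact this
  have hsub : {ω | B (X ω)} ⊆ {ω | ¬ symE (X ω)} ∪ ⋃ l ∈ (univ : Finset (Fin n → Bool)),
      ⋃ e ∈ (univ.filter (fun e : Fin n → Fin n → Bool => symE e)).filter B,
        {ω | σ ω = l ∧ X ω = e} := by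
    intro ω hω
    by_cases hs : symE (X ω)
    · right
      simp only [Set.mem_iUnion]
      exact ⟨σ ω, mem_univ _, X ω, by simp [hs]; exact hω, rfl, rfl⟩
    · left; exact hs
  have h1 : P {ω | B (X ω)} ≤ ∑ l : Fin n → Bool,
      ∑ e ∈ (univ.filter (fun e : Fin n → Fin n → Bool => symE e)).filter B,
        P {ω | σ ω = l ∧ X ω = e} := by
    refine (measure_mono hsub).trans ((measure_union_le _ _).trans ?_)
    rw [hnull, zero_add]
    refine (measure_biUnion_finset_le _ _).trans (sum_le_sum fun l _ => ?_)
    exact measure_biUnion_finset_le _ _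
  have h2 := ENNReal.toReal_mono (by
    simp [ENNReal.sum_eq_top]) h1
  refine h2.trans (le_of_eq ?_)
  rw [ENNReal.toReal_sum (by simp [ENNReal.sum_eq_top])]
  refine sum_congr rfl fun l _ => ?_
  rw [ENNReal.toReal_sum (by simp), sum_filter]
  refine sum_congr rfl fun e he => ?_
  simp only [mem_filter, mem_univ, true_and] at he
  split_ifs
  · exact hsbm.2 l e he.1 he.2
  · rfl

lemma main_bound {n : ℕ} {Ω : Type} [MeasurableSpace Ω] (P : Measure Ω) [IsProbabilityMeasure P]
    (p q t : ℝ) (hp : 0 ≤ p) (hq : 0 ≤ q)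
    (hp1 : p ≤ 1) (hq1 : q ≤ 1) (ht : 0 < t) (ht1 : t ≤ 1)
    (σ : Ω → Fin n → Bool) (X : Ω → Fin n → Fin n → Bool)
    (hmeas : ∀ (ℓ : Fin n → Bool) (e : Fin n → Fin n → Bool),
      MeasurableSet {ω | σ ω = ℓ ∧ X ω = e})
    (hsbm : sbmLaw P n p q σ X) (B : (Fin n → Fin n → Bool) → Prop) (k m : ℕ)
    (hB : ∀ e, B e → ∃ U : Finset (Fin n), U.card = m ∧ cross e U ≤ k * m) :
    (P {ω | B (X ω)}).toReal ≤ (n.choose m : ℝ) * ((t⁻¹) ^ (k * m) *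
      Real.exp ((n - m : ℝ) *
      (-(m * ((1 - t) * p + (1 - t) * q)) / 2 +
        (m * ((1 - t) * p + (1 - t) * q)) ^ 2 / 4))) := by
  classical
  refine (prob_le P p q σ X hmeas hsbm B).2.trans ?_
  have h1 : ∀ (l : Fin n → Bool) (e : Fin n → Fin n → Bool), (if B e then wt p q l e else 0) ≤
      ∑ U ∈ powersetCard m (univ : Finset (Fin n)),
        (t⁻¹) ^ (k * m) * (wt p q l e * t ^ cross e U) := by
    intro l e
    have hw := wt_nonneg p q hp hq hp1 hq1 l e
    have hnn : ∀ U ∈ powersetCard m (univ : Finset (Fin n)),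
        0 ≤ (t⁻¹) ^ (k * m) * (wt p q l e * t ^ cross e U) := fun U _ => by positivity
    split_ifs with hb
    · obtain ⟨U, hU, hc⟩ := hB e hb
      refine le_trans ?_ (single_le_sum hnn (mem_powersetCard.2 ⟨subset_univ U, hU⟩))
      have h2 : t ^ (k * m) ≤ t ^ cross e U := pow_le_pow_of_le_one ht.le ht1 hc
      calc wt p q l e = (t⁻¹) ^ (k * m) * (wt p q l e * t ^ (k * m)) := by
            rw [inv_pow]; field_simp
        _ ≤ _ := by gcongr
    · exact sum_nonneg hnn
  calc _ ≤ ∑ l : Fin n → Bool, ∑ e ∈ univ.filter (fun e : Fin n → Fin n → Bool => symE e),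
        ∑ U ∈ powersetCard m (univ : Finset (Fin n)),
        (t⁻¹) ^ (k * m) * (wt p q l e * t ^ cross e U) :=
        sum_le_sum fun l _ => sum_le_sum fun e _ => h1 l e
    _ = ∑ U ∈ powersetCard m (univ : Finset (Fin n)), (t⁻¹) ^ (k * m) *
        ∑ l : Fin n → Bool, ∑ e ∈ univ.filter (fun e : Fin n → Fin n → Bool => symE e),
          (wt p q l e * t ^ cross e U) := by
        simp_rw [mul_sum]
        rw [sum_comm]
        rw [sum_congr rfl fun l _ => sum_comm]
        rw [sum_comm, sum_comm]
        rw [sum_comm]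
        refine sum_congr rfl fun l _ => ?_
        rw [sum_comm]
    _ ≤ ∑ U ∈ powersetCard m (univ : Finset (Fin n)), ((t⁻¹) ^ (k * m) *
      Real.exp ((n - m : ℝ) *
      (-(m * ((1 - t) * p + (1 - t) * q)) / 2 +
        (m * ((1 - t) * p + (1 - t) * q)) ^ 2 / 4))) := by
        refine sum_le_sum fun U hU => ?_
        have := moment U p q t hp hq hp1 hq1 ht.le ht1
        rw [(mem_powersetCard.1 hU).2] at this
        exact mul_le_mul_of_nonneg_left this (by positivity)
    _ = _ := by
        rw [sum_const, card_powersetCard, card_univ, Fintype.card_fin, nsmul_eq_mul]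

lemma exp_bound (n m k : ℕ) (α β γ δ : ℝ) (hα : 0 < α) (hβ : 0 < β)
    (hγ : γ = 1 - (α + β) / 2 + δ) (hn : 0 < n) (hm : 1 ≤ m) (hmγ : (n : ℝ) ^ γ ≤ m)
    (hL : 1 ≤ Real.log n) (hmL : m * Real.log n ^ 2 ≤ n)
    (hQ : (1 + (α + β) + (α + β) ^ 2 / 4) + k * Real.log (Real.log n) - δ * Real.log n ≤ 0) :
    (n.choose m : ℝ) * ((((Real.log n)⁻¹)⁻¹) ^ (k * m) *
      Real.exp ((n - m : ℝ) *
      (-(m * ((1 - (Real.log n)⁻¹) * (α * Real.log n / n)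
          + (1 - (Real.log n)⁻¹) * (β * Real.log n / n))) / 2 +
        (m * ((1 - (Real.log n)⁻¹) * (α * Real.log n / n)
          + (1 - (Real.log n)⁻¹) * (β * Real.log n / n))) ^ 2 / 4)))
    ≤ Real.exp ((1 + (α + β) + (α + β) ^ 2 / 4) + k * Real.log (Real.log n)
        - δ * Real.log n) := by
  set L := Real.log n with hLdef
  set s := α + β with hs
  have hs0 : 0 < s := by positivity
  have hn0 : (0 : ℝ) < n := by exact_mod_cast hn
  have hm0 : (1 : ℝ) ≤ m := by exact_mod_cast hm
  have hL0 : 0 < L := by linarith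
  have h1 : (n.choose m : ℝ) ≤ Real.exp (m * (1 + (1 - γ) * L)) := by
    have a1 : (n.choose m : ℝ) ≤ (n : ℝ) ^ m / (m.factorial : ℝ) := Nat.choose_le_pow_div m n
    have a2 := Real.pow_div_factorial_le_exp (m : ℝ) (by positivity) m
    have hf : (0 : ℝ) < m.factorial := by exact_mod_cast Nat.factorial_pos m
    rw [div_le_iff₀ hf] at a2
    refine a1.trans ?_
    rw [div_le_iff₀ hf]
    have a3 : (n : ℝ) = Real.exp ((1 - γ) * L) * (n : ℝ) ^ γ := by
      rw [Real.rpow_def_of_pos hn0, ← Real.exp_add, ← hLdef]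
      rw [show (1 - γ) * L + L * γ = L by ring, hLdef, Real.exp_log hn0]
    calc (n : ℝ) ^ m = (Real.exp ((1 - γ) * L)) ^ m * ((n : ℝ) ^ γ) ^ m := by
          rw [← mul_pow, ← a3]
      _ ≤ (Real.exp ((1 - γ) * L)) ^ m * (m : ℝ) ^ m := by gcongr
      _ ≤ (Real.exp ((1 - γ) * L)) ^ m * (Real.exp m * m.factorial) := by gcongr
      _ = _ := by
          rw [← Real.exp_nat_mul, ← mul_assoc, ← Real.exp_add]
          congr 2; ring
  have h2 : ((L⁻¹)⁻¹) ^ (k * m) = Real.exp (m * (k * Real.log L)) := by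
    rw [inv_inv, ← Real.exp_log (pow_pos hL0 _), Real.log_pow]
    congr 1; push_cast; ring
  set y := (m : ℝ) / n with hy
  have hy0 : 0 ≤ y := by positivity
  have hyL : y * L ^ 2 ≤ 1 := by
    rw [hy, div_mul_eq_mul_div, div_le_one hn0]; exact hmL
  have hyL1 : y * L ≤ 1 := by nlinarith [mul_nonneg hy0 (mul_nonneg hL0.le (sub_nonneg.2 hL))]
  have hy1 : y ≤ 1 := by nlinarith [mul_nonneg hy0 (sub_nonneg.2 hL)]
  have hmy : (m : ℝ) = y * n := by rw [hy]; field_simp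
  have e1 : (m * ((1 - L⁻¹) * (α * L / n) + (1 - L⁻¹) * (β * L / n))) = y * (L - 1) * s := by
    rw [hy, hs]; field_simp
  have h3 : (n - m : ℝ) * (-(y * (L - 1) * s) / 2 + (y * (L - 1) * s) ^ 2 / 4)
      ≤ m * (-(L * s / 2) + s + s ^ 2 / 4) := by
    have e2 : (n - m : ℝ) * (-(y * (L - 1) * s) / 2 + (y * (L - 1) * s) ^ 2 / 4)
        = m * ((1 - y) * (-((L - 1) * s) / 2 + y * (L - 1) ^ 2 * s ^ 2 / 4)) := by
      rw [hmy]; ring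
    rw [e2]
    refine mul_le_mul_of_nonneg_left ?_ (by positivity)
    have b1 : y * (L - 1) ^ 2 ≤ 1 := by
      refine le_trans ?_ hyL
      gcongr <;> linarith
    have b2 : (1 - y) * (y * (L - 1) ^ 2) ≤ 1 := by
      have : 0 ≤ y * (L - 1) ^ 2 := by positivity
      have := mul_nonneg hy0 this
      linarith [sub_mul 1 y (y * (L - 1) ^ 2)]
    have b3 : (1 - y) * (y * (L - 1) ^ 2) * s ^ 2 ≤ 1 * s ^ 2 := by gcongr
    have b4 : y * (L - 1) * s ≤ 1 * s := by
      gcongr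
      linarith [mul_sub y L 1]
    have e3 : (1 - y) * (-((L - 1) * s) / 2 + y * (L - 1) ^ 2 * s ^ 2 / 4)
        = -(L * s / 2) + s / 2 + (y * (L - 1) * s) / 2
          + ((1 - y) * (y * (L - 1) ^ 2) * s ^ 2) / 4 := by ring
    rw [e3]
    linarith
  rw [e1, h2]
  calc _ ≤ Real.exp (m * (1 + (1 - γ) * L)) * (Real.exp (m * (k * Real.log L)) *
        Real.exp (m * (-(L * s / 2) + s + s ^ 2 / 4))) := by
        gcongr
    _ = Real.exp (m * ((1 + s + s ^ 2 / 4) + k * Real.log L - δ * L)) := by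
        rw [← Real.exp_add, ← Real.exp_add, hγ]
        congr 1; ring
    _ ≤ _ := by
        apply Real.exp_le_exp.2
        nlinarith

lemma tendsto_Q (C : ℝ) (k : ℕ) (δ : ℝ) (hδ : 0 < δ) :
    Filter.Tendsto (fun n : ℕ => C + k * Real.log (Real.log n) - δ * Real.log n)
      Filter.atTop Filter.atBot := by
  have hL : Filter.Tendsto (fun n : ℕ => Real.log n) Filter.atTop Filter.atTop :=
    Real.tendsto_log_atTop.comp tendsto_natCast_atTop_atTop
  have h1 : Filter.Tendsto (fun x : ℝ => C + k * Real.log x - δ * x)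
      Filter.atTop Filter.atBot := by
    have ho : (fun x : ℝ => (k : ℝ) * Real.log x) =o[Filter.atTop] (fun x : ℝ => x) :=
      Real.isLittleO_log_id_atTop.const_mul_left _
    have hb := ho.bound (c := δ / 2) (by positivity)
    have h2 : Filter.Tendsto (fun x : ℝ => C + (-(δ / 2)) * x) Filter.atTop Filter.atBot :=
      Filter.tendsto_atBot_add_const_left _ _
        (Filter.tendsto_id.const_mul_atTop_of_neg (by linarith))
    refine Filter.tendsto_atBot_mono' _ ?_ h2
    filter_upwards [hb, Filter.eventually_ge_atTop 0] with x hx hx0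
    rw [Real.norm_eq_abs, Real.norm_eq_abs, abs_of_nonneg hx0] at hx
    have := le_abs_self ((k : ℝ) * Real.log x)
    linarith
  exact h1.comp hL

lemma tendsto_pow_log (γ : ℝ) (hγ : γ < 1) (j : ℕ) :
    Filter.Tendsto (fun n : ℕ => ((n : ℝ) ^ γ + 1) * Real.log n ^ j / n)
      Filter.atTop (nhds 0) := by
  have key : ∀ c : ℝ, c < 1 → Filter.Tendsto
      (fun x : ℝ => x ^ c * Real.log x ^ j / x) Filter.atTop (nhds 0) := by
    intro c hc
    have h := isLittleO_log_rpow_rpow_atTop (s := 1 - c) (j : ℝ) (by linarith)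
    have h2 := h.tendsto_div_nhds_zero
    refine h2.congr' ?_
    filter_upwards [Filter.eventually_gt_atTop 0] with x hx
    rw [Real.rpow_sub hx, Real.rpow_one, Real.rpow_natCast]
    field_simp
  have h := ((key γ hγ).add (key 0 (by norm_num))).comp tendsto_natCast_atTop_atTop
  rw [add_zero] at h
  refine h.congr fun n => ?_
  simp only [Function.comp, Real.rpow_zero]
  ring

/-- in `SBM(n, α log n/n, β log n/n)` with fixed `k ≥ 1`, with probability
`1 − o(1)` the set `F` of vertices outside the `k`-core (i.e. vertices belonging to no
induced subgraph of minimum degree `≥ k`) satisfies `|F| ≤ n^{1 − (α+β)/2 + o(1)}`: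
for every `δ > 0`, `P(|F| ≤ n^{1 − (α+β)/2 + δ}) → 1`. -/
theorem statement11 (α β : ℝ) (hα : 0 < α) (hβ : 0 < β) (k : ℕ) (hk : 1 ≤ k)
    (δ : ℝ) (hδ : 0 < δ)
    (Ω : ℕ → Type) [∀ n, MeasurableSpace (Ω n)]
    (ℙ : ∀ n, Measure (Ω n)) (hP : ∀ n, IsProbabilityMeasure (ℙ n))
    (σ : ∀ n, Ω n → Fin n → Bool) (X : ∀ n, Ω n → Fin n → Fin n → Bool)
    (hmeas : ∀ (n : ℕ) (ℓ : Fin n → Bool) (e : Fin n → Fin n → Bool),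
      MeasurableSet {ω | σ n ω = ℓ ∧ X n ω = e})
    (hsbm : ∀ n, sbmLaw (ℙ n) n (α * Real.log n / n) (β * Real.log n / n) (σ n) (X n)) :
    Filter.Tendsto
      (fun n : ℕ => (ℙ n {ω |
        (Set.ncard {i : Fin n | ∀ S : Finset (Fin n),
            (∀ v ∈ S, k ≤ (S.filter (fun u => u ≠ v ∧ X n ω v u = true)).card) →
            i ∉ S} : ℝ)
          ≤ (n : ℝ) ^ (1 - (α + β) / 2 + δ)}).toReal)
      Filter.atTop (nhds 1) := by
  classical
  set γ := 1 - (α + β) / 2 + δ with hγ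
  set B : ∀ n : ℕ, (Fin n → Fin n → Bool) → Prop := fun n e =>
    ¬ ((Set.ncard {i : Fin n | ∀ S : Finset (Fin n),
            (∀ v ∈ S, k ≤ (S.filter (fun u => u ≠ v ∧ e v u = true)).card) →
            i ∉ S} : ℝ) ≤ (n : ℝ) ^ γ) with hB
  have hcompl : ∀ n, (ℙ n {ω |
        (Set.ncard {i : Fin n | ∀ S : Finset (Fin n),
            (∀ v ∈ S, k ≤ (S.filter (fun u => u ≠ v ∧ X n ω v u = true)).card) →
            i ∉ S} : ℝ)
          ≤ (n : ℝ) ^ γ}).toReal = 1 - (ℙ n {ω | B n (X n ω)}).toReal := by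
    intro n
    have := hP n
    have hm := (prob_le (ℙ n) _ _ (σ n) (X n) (hmeas n) (hsbm n) (B n)).1
    have h2 := probReal_compl_eq_one_sub (μ := ℙ n) hm
    rw [measureReal_def, measureReal_def] at h2
    rw [← h2]
    congr 2
    ext ω
    simp [hB]
  simp_rw [hcompl]
  suffices h : Filter.Tendsto (fun n => (ℙ n {ω | B n (X n ω)}).toReal) Filter.atTop (nhds 0) by
    simpa using h.const_sub 1
  by_cases hγ1 : 1 ≤ γ
  · refine tendsto_const_nhds.congr' ?_
    filter_upwards [Filter.eventually_ge_atTop 1] with n hn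
    have : {ω | B n (X n ω)} = ∅ := by
      ext ω
      simp only [hB, Set.mem_ofPred_eq, Set.mem_empty_iff_false, iff_false, not_not]
      refine le_trans ?_ (Real.self_le_rpow_of_one_le (by exact_mod_cast hn) hγ1)
      have := Set.ncard_le_card {i : Fin n | ∀ S : Finset (Fin n),
            (∀ v ∈ S, k ≤ (S.filter (fun u => u ≠ v ∧ X n ω v u = true)).card) → i ∉ S}
      rw [Nat.card_fin] at this
      exact_mod_cast this
    rw [this]; simp
  push Not at hγ1
  have hQ := tendsto_Q (1 + (α + β) + (α + β) ^ 2 / 4) k δ hδ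
  refine tendsto_of_tendsto_of_tendsto_of_le_of_le' tendsto_const_nhds
    (Real.tendsto_exp_atBot.comp hQ) (Filter.Eventually.of_forall fun n => ENNReal.toReal_nonneg) ?_
  have hL : Filter.Tendsto (fun n : ℕ => Real.log n) Filter.atTop Filter.atTop :=
    Real.tendsto_log_atTop.comp tendsto_natCast_atTop_atTop
  have hlin : ∀ c : ℝ, ∀ᶠ n : ℕ in Filter.atTop, c * Real.log n / n ≤ 1 := by
    intro c
    have h0 := Real.isLittleO_log_id_atTop.tendsto_div_nhds_zero.comp
      (tendsto_natCast_atTop_atTop (R := ℝ))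
    have h1 := h0.const_mul c
    rw [mul_zero] at h1
    filter_upwards [h1.eventually_le_const one_pos] with n hn
    simpa [mul_div_assoc] using hn
  filter_upwards [Filter.eventually_ge_atTop 1, hL.eventually_ge_atTop 1, hlin α, hlin β,
    (tendsto_pow_log γ hγ1 2).eventually_le_const one_pos, hQ.eventually_le_atBot 0]
    with n hn hLn hp hq hmn hQn
  have := hP n
  have hn0 : (0 : ℝ) < n := by exact_mod_cast hn
  have hL0 : 0 < Real.log n := by linarith
  set m := ⌊(n : ℝ) ^ γ⌋₊ + 1 with hm
  have hmγ : (n : ℝ) ^ γ ≤ m := by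
    rw [hm]; push_cast; exact (Nat.lt_floor_add_one _).le
  have hmu : (m : ℝ) ≤ (n : ℝ) ^ γ + 1 := by
    rw [hm]; push_cast
    gcongr
    exact Nat.floor_le (by positivity)
  refine (main_bound (ℙ n) _ _ (Real.log n)⁻¹ (by positivity) (by positivity) hp hq
    (by positivity) (inv_le_one_of_one_le₀ hLn) (σ n) (X n) (hmeas n) (hsbm n) (B n) k m ?_).trans
    (exp_bound n m k α β γ δ hα hβ hγ hn (by omega) hmγ hLn ?_ hQn)
  · intro e he
    apply peel
    simp only [hB, not_le] at he
    rw [hm]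
    exact Nat.succ_le_of_lt ((Nat.floor_lt (by positivity)).2 he)
  · rw [div_le_one hn0] at hmn
    refine le_trans ?_ hmn
    gcongr
end
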